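/- One has φ03∧(Θ02 + (1/2)·Ω∧Ω)∧Ω = 0, where Ω = φ11 + θs. (This expresses that the invariant curvature-measure form Λ_{2,3} = φ_{0,3}∧[Θ_{0,2} + (1/2)(dα)²] on the sphere bundle of ℍ² is primitive, i.e. Λ_{2,3}∧dα = 0, since the restriction of dα to the contact plane is −Ω.) -/

import Mathlib

/-!
Every product `u ∧ v` of two 1-forms is central in the exterior algebra, so `φ11` and `θs` are
central. Since each summand of `φ11` contains a factor of `φ03 = γi ∧ γj ∧ γk`, we have
`φ03 ∧ φ11 = 0`, and centrality of `φ11` and `θs` allows `Ω` to be replaced by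
`θs` everywhere in the claim.

Put `a_m = dy_m ∧ dx_m`. The diagonal terms of `Θ02` (those of the form
`dy_p ∧ dy_q ∧ dx_p ∧ dx_q = -a_p ∧ a_q`) add up to `-∑_{p<q} a_p ∧ a_q = -(1/2) θs ∧ θs`, so
`Θ02 + (1/2) θs ∧ θs` is a combination of the cross terms `dy_p ∧ dy_q ∧ dx_r ∧ dx_s` with
`{p, q, r, s} = {1, 2, 3, 4}`. Each cross term shares a factor with every `a_m`, hence is
annihilated by `θs`.
-/

noncomputable section

open ExteriorAlgebra

/-- Basis 1-forms of the dual of `ℝ^14`, modelled as generators of the exterior algebra of a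
14-dimensional real vector space. -/
def e14 (i : Fin 14) : ExteriorAlgebra ℝ (Fin 14 → ℝ) :=
  ExteriorAlgebra.ι ℝ (Pi.single i 1)

def βi : ExteriorAlgebra ℝ (Fin 14 → ℝ) := e14 0
def βj : ExteriorAlgebra ℝ (Fin 14 → ℝ) := e14 1
def βk : ExteriorAlgebra ℝ (Fin 14 → ℝ) := e14 2
def γi : ExteriorAlgebra ℝ (Fin 14 → ℝ) := e14 3
def γj : ExteriorAlgebra ℝ (Fin 14 → ℝ) := e14 4
def γk : ExteriorAlgebra ℝ (Fin 14 → ℝ) := e14 5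
def dx1 : ExteriorAlgebra ℝ (Fin 14 → ℝ) := e14 6
def dx2 : ExteriorAlgebra ℝ (Fin 14 → ℝ) := e14 7
def dx3 : ExteriorAlgebra ℝ (Fin 14 → ℝ) := e14 8
def dx4 : ExteriorAlgebra ℝ (Fin 14 → ℝ) := e14 9
def dy1 : ExteriorAlgebra ℝ (Fin 14 → ℝ) := e14 10
def dy2 : ExteriorAlgebra ℝ (Fin 14 → ℝ) := e14 11
def dy3 : ExteriorAlgebra ℝ (Fin 14 → ℝ) := e14 12
def dy4 : ExteriorAlgebra ℝ (Fin 14 → ℝ) := e14 13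

def θ0i : ExteriorAlgebra ℝ (Fin 14 → ℝ) := dy1 * dy2 - dy3 * dy4
def θ0j : ExteriorAlgebra ℝ (Fin 14 → ℝ) := dy1 * dy3 + dy2 * dy4
def θ0k : ExteriorAlgebra ℝ (Fin 14 → ℝ) := dy1 * dy4 - dy2 * dy3
def θ2i : ExteriorAlgebra ℝ (Fin 14 → ℝ) := dx1 * dx2 - dx3 * dx4
def θ2j : ExteriorAlgebra ℝ (Fin 14 → ℝ) := dx1 * dx3 + dx2 * dx4
def θ2k : ExteriorAlgebra ℝ (Fin 14 → ℝ) := dx1 * dx4 - dx2 * dx3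
def θs : ExteriorAlgebra ℝ (Fin 14 → ℝ) := -(dy1 * dx1 + dy2 * dx2 + dy3 * dx3 + dy4 * dx4)

def Θ02 : ExteriorAlgebra ℝ (Fin 14 → ℝ) := θ0i * θ2i + θ0j * θ2j + θ0k * θ2k
def φ03 : ExteriorAlgebra ℝ (Fin 14 → ℝ) := γi * γj * γk
def φ11 : ExteriorAlgebra ℝ (Fin 14 → ℝ) := βi * γi + βj * γj + βk * γk
def Ω : ExteriorAlgebra ℝ (Fin 14 → ℝ) := φ11 + θs

section General

variable {M : Type*} [AddCommGroup M] [Module ℝ M]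

local notation "w" => ExteriorAlgebra.ι ℝ (M := M)

lemma w_anticomm (u v : M) : w u * w v = -(w v * w u) :=
  eq_neg_of_add_eq_zero_left (ExteriorAlgebra.ι_add_mul_swap u v)

/-- A product of two 1-forms is central. -/
lemma commute_pair (u v : M) (z : ExteriorAlgebra ℝ M) : Commute (w u * w v) z := by
  induction z using ExteriorAlgebra.induction with
  | algebraMap r => exact (Algebra.commutes r _).symm
  | ι x =>
    rw [Commute, SemiconjBy, mul_assoc, w_anticomm v x, mul_neg, ← mul_assoc, w_anticomm u x,
      neg_mul, neg_neg, mul_assoc]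
  | mul a b ha hb => exact ha.mul_right hb
  | add a b ha hb => exact ha.add_right hb

lemma pair_sq (u v : M) : w u * w v * (w u * w v) = 0 := by
  rw [← mul_assoc, (commute_pair u v (w u)).eq, ← mul_assoc, ExteriorAlgebra.ι_sq_zero]
  simp

/-- Regrouping of a diagonal term of `Θ02`. -/
lemma diag_term (p q r s : M) :
    w p * w q * (w r * w s) = -(w p * w r * (w q * w s)) := by
  rw [mul_assoc, ← mul_assoc (w q), w_anticomm q r]
  simp only [neg_mul, mul_neg, mul_assoc]

/-- A cross term `y₁ ∧ y₂ ∧ x₃ ∧ x₄` is annihilated by `∑ yₘ ∧ xₘ`. -/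
lemma cross_term (y₁ y₂ y₃ y₄ x₁ x₂ x₃ x₄ : M) :
    w y₁ * w y₂ * (w x₃ * w x₄) *
      (w y₁ * w x₁ + w y₂ * w x₂ + w y₃ * w x₃ + w y₄ * w x₄) = 0 := by
  have left (u v x : M) : w u * w v * (w u * w x) = 0 := by
    rw [diag_term, ExteriorAlgebra.ι_sq_zero, zero_mul, neg_zero]
  have right (u v x : M) : w u * w v * (w x * w v) = 0 := by
    rw [diag_term, mul_assoc, ExteriorAlgebra.ι_sq_zero, mul_zero, mul_zero, neg_zero]
  have hA (t : M) : w y₁ * w y₂ * (w x₃ * w x₄) * (w y₁ * w t) = 0 := by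
    rw [mul_assoc, (commute_pair x₃ x₄ _).eq, ← mul_assoc, left, zero_mul]
  have hB (t : M) : w y₁ * w y₂ * (w x₃ * w x₄) * (w y₂ * w t) = 0 := by
    rw [mul_assoc, (commute_pair x₃ x₄ _).eq, ← mul_assoc, w_anticomm y₁ y₂, neg_mul, left,
      neg_zero, zero_mul]
  have hC (t : M) : w y₁ * w y₂ * (w x₃ * w x₄) * (w t * w x₃) = 0 := by
    rw [mul_assoc, w_anticomm x₃ x₄, neg_mul, right, neg_zero, mul_zero]
  have hD (t : M) : w y₁ * w y₂ * (w x₃ * w x₄) * (w t * w x₄) = 0 := by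
    rw [mul_assoc, right, mul_zero]
  rw [mul_add, mul_add, mul_add, hA, hB, hC, hD]
  simp

/-- Half the square of a sum of four commuting elements of square zero. -/
lemma half_sq {R : Type*} [Ring R] [Algebra ℝ R] (a b c d : R)
    (ha : a * a = 0) (hb : b * b = 0) (hc : c * c = 0) (hd : d * d = 0)
    (hab : b * a = a * b) (hac : c * a = a * c) (had : d * a = a * d)
    (hbc : c * b = b * c) (hbd : d * b = b * d) (hcd : d * c = c * d) :
    (1 / 2 : ℝ) • ((a + b + c + d) * (a + b + c + d)) =
      a * b + a * c + a * d + b * c + b * d + c * d := by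
  simp only [mul_add, add_mul, ha, hb, hc, hd, hab, hac, had, hbc, hbd, hcd]
  module

end General

lemma θs_central (z : ExteriorAlgebra ℝ (Fin 14 → ℝ)) : Commute θs z :=
  ((((commute_pair _ _ z).add_left (commute_pair _ _ z)).add_left
    (commute_pair _ _ z)).add_left (commute_pair _ _ z)).neg_left

lemma φ11_central (z : ExteriorAlgebra ℝ (Fin 14 → ℝ)) : Commute φ11 z :=
  ((commute_pair _ _ z).add_left (commute_pair _ _ z)).add_left (commute_pair _ _ z)

lemma φ03_mul_φ11 : φ03 * φ11 = 0 := by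
  have h (i j : Fin 14) : e14 j * (e14 i * e14 j) = 0 := by
    rw [e14, e14, ← (commute_pair _ _ _).eq, mul_assoc, ExteriorAlgebra.ι_sq_zero, mul_zero]
  have hi : γi * (βi * γi) = 0 := h 0 3
  have hj : γj * (βj * γj) = 0 := h 1 4
  have hk : γk * (βk * γk) = 0 := h 2 5
  have ci (z) : z * (βi * γi) = βi * γi * z := (commute_pair _ _ z).eq.symm
  have cj (z) : z * (βj * γj) = βj * γj * z := (commute_pair _ _ z).eq.symm
  rw [φ03, φ11, mul_add, mul_add, mul_assoc _ γk (βk * γk), hk, mul_assoc γi γj γk,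
    mul_assoc γi (γj * γk) (βi * γi), ci (γj * γk), ← mul_assoc γi, hi,
    mul_assoc γi (γj * γk) (βj * γj), mul_assoc γj γk, cj γk, ← mul_assoc γj, hj]
  simp

/-- The part of `Θ02` left after the diagonal terms cancel against `(1/2) θs ∧ θs`. -/
lemma Θ02_add_half_sq :
    Θ02 + (1 / 2 : ℝ) • (θs * θs) =
      -(dy1 * dy2 * (dx3 * dx4)) - dy3 * dy4 * (dx1 * dx2) + dy1 * dy3 * (dx2 * dx4)
        + dy2 * dy4 * (dx1 * dx3) - dy1 * dy4 * (dx2 * dx3) - dy2 * dy3 * (dx1 * dx4) := by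
  have h := half_sq (dy1 * dx1) (dy2 * dx2) (dy3 * dx3) (dy4 * dx4)
    (pair_sq _ _) (pair_sq _ _) (pair_sq _ _) (pair_sq _ _)
    (commute_pair _ _ _).eq (commute_pair _ _ _).eq (commute_pair _ _ _).eq
    (commute_pair _ _ _).eq (commute_pair _ _ _).eq (commute_pair _ _ _).eq
  have d12 : dy1 * dy2 * (dx1 * dx2) = -(dy1 * dx1 * (dy2 * dx2)) := diag_term _ _ _ _
  have d13 : dy1 * dy3 * (dx1 * dx3) = -(dy1 * dx1 * (dy3 * dx3)) := diag_term _ _ _ _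
  have d14 : dy1 * dy4 * (dx1 * dx4) = -(dy1 * dx1 * (dy4 * dx4)) := diag_term _ _ _ _
  have d23 : dy2 * dy3 * (dx2 * dx3) = -(dy2 * dx2 * (dy3 * dx3)) := diag_term _ _ _ _
  have d24 : dy2 * dy4 * (dx2 * dx4) = -(dy2 * dx2 * (dy4 * dx4)) := diag_term _ _ _ _
  have d34 : dy3 * dy4 * (dx3 * dx4) = -(dy3 * dx3 * (dy4 * dx4)) := diag_term _ _ _ _
  rw [θs, neg_mul_neg, h, Θ02, θ0i, θ0j, θ0k, θ2i, θ2j, θ2k]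
  simp only [sub_mul, mul_sub, add_mul, mul_add,
    d12, d13, d14, d23, d24, d34]
  abel

lemma cross_mul_θs : (Θ02 + (1 / 2 : ℝ) • (θs * θs)) * θs = 0 := by
  -- `σ` is `-θs`; reordering its summands puts each product in the shape of `cross_term`.
  obtain ⟨σ, hσ⟩ : ∃ σ, σ = dy1 * dx1 + dy2 * dx2 + dy3 * dx3 + dy4 * dx4 := ⟨_, rfl⟩
  have c12 : dy1 * dy2 * (dx3 * dx4) * σ = 0 := by
    rw [hσ]; exact cross_term _ _ _ _ _ _ _ _
  have c34 : dy3 * dy4 * (dx1 * dx2) * σ = 0 := by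
    rw [show σ = dy3 * dx3 + dy4 * dx4 + dy1 * dx1 + dy2 * dx2 by rw [hσ]; abel]
    exact cross_term _ _ _ _ _ _ _ _
  have c13 : dy1 * dy3 * (dx2 * dx4) * σ = 0 := by
    rw [show σ = dy1 * dx1 + dy3 * dx3 + dy2 * dx2 + dy4 * dx4 by rw [hσ]; abel]
    exact cross_term _ _ _ _ _ _ _ _
  have c24 : dy2 * dy4 * (dx1 * dx3) * σ = 0 := by
    rw [show σ = dy2 * dx2 + dy4 * dx4 + dy1 * dx1 + dy3 * dx3 by rw [hσ]; abel]
    exact cross_term _ _ _ _ _ _ _ _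
  have c14 : dy1 * dy4 * (dx2 * dx3) * σ = 0 := by
    rw [show σ = dy1 * dx1 + dy4 * dx4 + dy2 * dx2 + dy3 * dx3 by rw [hσ]; abel]
    exact cross_term _ _ _ _ _ _ _ _
  have c23 : dy2 * dy3 * (dx1 * dx4) * σ = 0 := by
    rw [show σ = dy2 * dx2 + dy3 * dx3 + dy1 * dx1 + dy4 * dx4 by rw [hσ]; abel]
    exact cross_term _ _ _ _ _ _ _ _
  have hθ : θs = -σ := by rw [hσ, θs]
  rw [Θ02_add_half_sq, hθ, mul_neg]
  simp only [add_mul, sub_mul, neg_mul, c12, c34, c13, c24, c14, c23]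
  simp

theorem Lambda23_primitive :
    φ03 * (Θ02 + (1 / 2 : ℝ) • (Ω * Ω)) * Ω = 0 := by
  have hkill (z) : φ03 * z * φ11 = 0 := by
    rw [mul_assoc, ← (φ11_central z).eq, ← mul_assoc, φ03_mul_φ11, zero_mul]
  have hΩ (z) : φ03 * z * Ω = φ03 * z * θs := by
    rw [Ω, mul_add, hkill, zero_add]
  have hΩΩ : φ03 * (Ω * Ω) = φ03 * (θs * θs) := by
    rw [← mul_assoc, hΩ, mul_assoc, ← (θs_central Ω).eq, ← mul_assoc, hΩ, mul_assoc]
  have hΛ : φ03 * (Θ02 + (1 / 2 : ℝ) • (Ω * Ω)) = φ03 * (Θ02 + (1 / 2 : ℝ) • (θs * θs)) := by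
    rw [mul_add, mul_add, mul_smul_comm, mul_smul_comm, hΩΩ]
  rw [hΛ, hΩ, mul_assoc, cross_mul_θs, mul_zero]

end
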